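/- arXiv:2412.13319 — 2 statements merged into one kernel-verified Lean document; each statement's English description precedes it below -/
import Mathlib

section
/- Let M be a metric space such that every dense subset of M carries a nontrivial probability measure. Then there exists a Borel probability measure μ on M that is not concentrated on any separable subset, i.e. μ(M \ S) > 0 for every closed separable set S ⊆ M. -/
open MeasureTheory

/-- A subset `A` of a space carries a *nontrivial probability measure* if there is a
probability measure on `A` (with the powerset σ-algebra `⊤`) giving every singleton
measure zero. -/
def HasNontrivialProbMeasure {M : Type*} (A : Set M) : Prop :=
  ∃ μ : @Measure ↥A ⊤, @IsProbabilityMeasure ↥A ⊤ μ ∧ ∀ x : ↥A, μ {x} = 0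

/-!
Let `ε n → 0`. A maximal `ε n`-separated set `A n` is an `ε n`-net, so `⋃ n, A n` is dense and
carries a nontrivial probability measure. By countable additivity some `A n` has positive mass,
hence carries one itself. A uniformly separated set meets a separable set in countably many points,
so the push-forward of this measure to the whole space vanishes on every separable set.
-/

open Filter Metric ProbabilityTheory Set TopologicalSpace
open scoped ENNReal NNReal Topology

section Separated

variable {X : Type*} [PseudoEMetricSpace X]

theorem exists_isSeparated_isCover (ε : ℝ≥0) (s : Set X) :
    ∃ N ⊆ s, IsSeparated ε N ∧ IsCover ε s N := by
  obtain ⟨N, hN⟩ : ∃ N, Maximal (fun N ↦ N ⊆ s ∧ IsSeparated ε N) N := by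
    refine zorn_subset {N | N ⊆ s ∧ IsSeparated ε N} fun c hcs hc ↦
      ⟨⋃₀ c, ⟨sUnion_subset fun N hN ↦ (hcs hN).1, ?_⟩, fun N ↦ subset_sUnion_of_mem⟩
    exact (pairwise_sUnion hc.directedOn).2 fun N hN ↦ (hcs hN).2
  exact ⟨N, hN.prop.1, hN.prop.2, .of_maximal_isSeparated hN⟩

theorem dense_iUnion_of_isCover {ι : Type*} {l : Filter ι} [l.NeBot] {ε : ι → ℝ≥0}
    {N : ι → Set X} (hε : Tendsto ε l (𝓝 0)) (hN : ∀ i, IsCover (ε i) univ (N i)) :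
    Dense (⋃ i, N i) := by
  intro x
  refine EMetric.mem_closure_iff.2 fun δ hδ ↦ ?_
  have hε' : Tendsto (fun i ↦ (ε i : ℝ≥0∞)) l (𝓝 0) := ENNReal.tendsto_coe.2 hε
  obtain ⟨i, hi⟩ := (hε'.eventually_lt_const hδ).exists
  obtain ⟨y, hy, hxy⟩ := hN i (mem_univ x)
  exact ⟨y, mem_iUnion_of_mem i hy, hxy.trans_lt hi⟩

variable (X) in
theorem exists_dense_iUnion_isSeparated :
    ∃ A : ℕ → Set X, (∀ n, ∃ ε ≠ 0, IsSeparated ε (A n)) ∧ Dense (⋃ n, A n) := by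
  obtain ⟨ε, -, hεpos, hε⟩ := exists_seq_strictAnti_tendsto (0 : ℝ≥0)
  choose A _ hsep hcover using fun n ↦ exists_isSeparated_isCover (ε n) (univ : Set X)
  exact ⟨A, fun n ↦ ⟨ε n, ENNReal.coe_ne_zero.2 (hεpos n).ne', hsep n⟩,
    dense_iUnion_of_isCover hε hcover⟩

theorem countable_inter_of_isSeparated_of_isSeparable {ε : ℝ≥0∞} {A S : Set X} (hε : ε ≠ 0)
    (hA : IsSeparated ε A) (hS : IsSeparable S) : (A ∩ S).Countable := by
  obtain ⟨c, hc, hSc⟩ := hS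
  have happrox : ∀ x ∈ A ∩ S, ∃ y ∈ c, edist x y < ε / 2 := fun x hx ↦
    EMetric.mem_closure_iff.1 (hSc hx.2) _ (ENNReal.half_pos hε)
  choose! f hfc hf using happrox
  refine MapsTo.countable_of_injOn hfc (fun x hx y hy hxy ↦ ?_) hc
  by_contra hne
  refine (hA hx.1 hy.1 hne).not_ge ?_
  calc edist x y ≤ edist x (f x) + edist y (f x) := edist_triangle_right ..
    _ ≤ ε / 2 + ε / 2 := add_le_add (hf x hx).le (hxy ▸ (hf y hy).le)
    _ = ε := ENNReal.add_halves ε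

end Separated

namespace HasNontrivialProbMeasure

variable {M : Type*}

theorem exists_of_iUnion {ι : Type*} [Countable ι] {A : ι → Set M}
    (h : HasNontrivialProbMeasure (⋃ i, A i)) : ∃ i, HasNontrivialProbMeasure (A i) := by
  let (s : Set M) : MeasurableSpace s := ⊤
  obtain ⟨ν, hν, hν0⟩ := h
  obtain ⟨i, hi⟩ : ∃ i, ν (Subtype.val ⁻¹' A i) ≠ 0 := by
    by_contra! hnull
    have hunion : ν (⋃ i, Subtype.val ⁻¹' A i) = 0 := measure_iUnion_null hnull
    rw [← preimage_iUnion, Subtype.coe_preimage_self, measure_univ] at hunion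
    exact one_ne_zero hunion
  set T : Set (⋃ i, A i) := Subtype.val ⁻¹' A i
  let incl : A i → ⋃ i, A i := inclusion (subset_iUnion A i)
  have hincl : MeasurableEmbedding incl :=
    ⟨inclusion_injective _, measurable_from_top, fun _ _ ↦ MeasurableSpace.measurableSet_top⟩
  have hcond : IsProbabilityMeasure ν[|T] := cond_isProbabilityMeasure hi
  refine ⟨i, ν[|T].comap incl, hincl.isProbabilityMeasure_comap ?_, fun x ↦ ?_⟩
  · rw [range_inclusion]
    exact ae_cond_mem MeasurableSpace.measurableSet_top
  · rw [hincl.comap_apply, image_singleton]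
    exact cond_absolutelyContinuous (hν0 _)

theorem exists_measure_eq_zero_of_countable_inter [MeasurableSpace M] {A : Set M}
    (h : HasNontrivialProbMeasure A) :
    ∃ μ : Measure M, IsProbabilityMeasure μ ∧
      ∀ S, MeasurableSet S → (A ∩ S).Countable → μ S = 0 := by
  let : MeasurableSpace A := ⊤
  obtain ⟨ν, hν, hν0⟩ := h
  have : NullSingletonClass ν := ⟨hν0⟩
  have hval : Measurable (Subtype.val : A → M) := measurable_from_top
  refine ⟨ν.map Subtype.val, Measure.isProbabilityMeasure_map hval.aemeasurable,
    fun S hS hAS ↦ ?_⟩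
  have hcount : (Subtype.val ⁻¹' S : Set A).Countable := by
    rw [← Subtype.preimage_coe_self_inter]
    exact hAS.preimage Subtype.val_injective
  rw [Measure.map_apply hval hS, hcount.measure_zero]

end HasNontrivialProbMeasure

theorem stmt5_general {M : Type*} [PseudoEMetricSpace M] [MeasurableSpace M]
    [OpensMeasurableSpace M] (h : ∀ D : Set M, Dense D → HasNontrivialProbMeasure D) :
    ∃ μ : Measure M, IsProbabilityMeasure μ ∧ ∀ S : Set M, IsSeparable S → μ S = 0 := by
  obtain ⟨A, hsep, hdense⟩ := exists_dense_iUnion_isSeparated M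
  obtain ⟨n, hn⟩ := (h _ hdense).exists_of_iUnion
  obtain ⟨ε, hε, hAn⟩ := hsep n
  obtain ⟨μ, hμ, hμ0⟩ := hn.exists_measure_eq_zero_of_countable_inter
  refine ⟨μ, hμ, fun S hS ↦ measure_mono_null subset_closure ?_⟩
  exact hμ0 _ measurableSet_closure
    (countable_inter_of_isSeparated_of_isSeparable hε hAn hS.closure)

theorem stmt5 {M : Type*} [MetricSpace M] [MeasurableSpace M] [BorelSpace M]
    (h : ∀ D : Set M, Dense D → HasNontrivialProbMeasure D) :
    ∃ μ : Measure M, IsProbabilityMeasure μ ∧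
      ∀ S : Set M, IsClosed S → TopologicalSpace.IsSeparable S → 0 < μ Sᶜ := by
  obtain ⟨μ, hμ, hμ0⟩ := stmt5_general h
  exact ⟨μ, hμ, fun S hS hsep ↦ by simp [prob_compl_eq_one_sub hS.measurableSet, hμ0 S hsep]⟩
end

section
/- Let M be a complete metric space and let μ be a finite Borel measure on M. Then μ is inner regular with respect to compact sets (i.e. μ(E) = sup{ μ(K) : K ⊆ E, K compact } for every Borel set E ⊆ M) if and only if μ is concentrated on a separable subset of M, i.e. there exists a closed separable set S ⊆ M with μ(M \ S) = 0. -/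
/-!
An inner regular measure gives no mass to the complement of its support, since a compact set
disjoint from the support is covered by finitely many null open sets. The support of an s-finite
measure `μ` on a pseudometrizable space is separable: the balls of radius `ε / 2` around the points
of an `ε`-separated subset are disjoint and have positive measure, so the subset is countable, and a
maximal such subset is an `ε`-net. Conversely, a measure concentrated on a closed separable set `S`
is the image of a measure on `S`, which is second countable and inherits completeness, so that
Ulam's tightness theorem applies on `S` to each finite summand of the measure; inner regularity is
preserved by continuous images and by sums.
-/

open MeasureTheory

open Metric Set TopologicalSpace

open scoped ENNReal

section Regularity

variable {X : Type*} [TopologicalSpace X] [MeasurableSpace X] {μ : Measure X}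

theorem innerRegular_iff_measure_eq_iSup_isCompact :
    μ.InnerRegular ↔ ∀ E : Set X, MeasurableSet E →
      μ E = ⨆ (K : Set X) (_ : K ⊆ E) (_ : IsCompact K), μ K := by
  refine ⟨fun _ E hE ↦ hE.measure_eq_iSup_isCompact μ, fun h ↦ ⟨fun E hE r hr ↦ ?_⟩⟩
  rw [h E hE] at hr
  simpa only [lt_iSup_iff, exists_prop] using hr

variable [IsCompletelyPseudoMetrizableSpace X] [BorelSpace X] {S : Set X}

theorem innerRegular_of_isFiniteMeasure_of_isSeparable [IsFiniteMeasure μ]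
    (hS : IsClosed S) (hS_sep : IsSeparable S) (hμS : μ Sᶜ = 0) : μ.InnerRegular := by
  have : SecondCountableTopology S := hS_sep.secondCountableTopology
  have : IsCompletelyPseudoMetrizableSpace S :=
    hS.isClosedEmbedding_subtypeVal.IsCompletelyPseudoMetrizableSpace
  have map_comap : (μ.comap ((↑) : S → X)).map (↑) = μ := by
    rw [map_comap_subtype_coe hS.measurableSet, Measure.restrict_eq_self_of_ae_mem hμS]
  rw [← map_comap]
  exact .map_of_continuous continuous_subtype_val

theorem innerRegular_of_isSeparable_of_measure_compl_eq_zero [SFinite μ]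
    (hS : IsClosed S) (hS_sep : IsSeparable S) (hμS : μ Sᶜ = 0) : μ.InnerRegular := by
  have (n : ℕ) : (sfiniteSeq μ n).InnerRegular :=
    innerRegular_of_isFiniteMeasure_of_isSeparable hS hS_sep
      ((sfiniteSeq_le μ n).absolutelyContinuous hμS)
  rw [← sum_sfiniteSeq μ]
  infer_instance

end Regularity

section Support

theorem exists_maximal_isSeparated {X : Type*} [PseudoEMetricSpace X] (ε : ℝ≥0∞) (s : Set X) :
    ∃ N, Maximal (fun N ↦ N ⊆ s ∧ IsSeparated ε N) N :=
  zorn_subset {N | N ⊆ s ∧ IsSeparated ε N} fun c hc hchain ↦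
    ⟨⋃₀ c, ⟨sUnion_subset fun _ hN ↦ (hc hN).1,
      (pairwise_sUnion hchain.directedOn).2 fun _ hN ↦ (hc hN).2⟩,
      fun _ ↦ subset_sUnion_of_mem⟩

theorem countable_of_isSeparated_of_subset_support {X : Type*} [PseudoEMetricSpace X]
    [MeasurableSpace X] [OpensMeasurableSpace X] {μ : Measure X} [SFinite μ] {ε : ℝ≥0∞}
    (hε : ε ≠ 0) {N : Set X} (hN : IsSeparated ε N) (hNμ : N ⊆ μ.support) : N.Countable := by
  have disjoint_balls (x y : N) (hxy : x ≠ y) :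
      Disjoint (eball (x : X) (ε / 2)) (eball (y : X) (ε / 2)) :=
    eball_disjoint <| (ENNReal.add_halves ε).trans_le
      (hN x.2 y.2 (Subtype.coe_injective.ne hxy)).le
  have balls_pos (x : N) : 0 < μ (eball (x : X) (ε / 2)) :=
    (Measure.mem_support_iff_forall _).1 (hNμ x.2) _ <| eball_mem_nhds _ (ENNReal.half_pos hε)
  have countable_pos : {x : N | 0 < μ (eball (x : X) (ε / 2))}.Countable :=
    Measure.countable_meas_pos_of_disjoint_iUnion
      (fun _ ↦ isOpen_eball.measurableSet) fun x y ↦ disjoint_balls x y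
  exact countable_coe_iff.1 <| countable_univ_iff.1 <| countable_pos.mono fun x _ ↦ balls_pos x

theorem isSeparable_support {X : Type*} [TopologicalSpace X] [PseudoMetrizableSpace X]
    [MeasurableSpace X] [OpensMeasurableSpace X] (μ : Measure X) [SFinite μ] :
    IsSeparable μ.support := by
  let := pseudoMetrizableSpacePseudoMetric X
  obtain ⟨t, -, ht, hμt⟩ := EMetric.subset_countable_closure_of_almost_dense_set μ.support
    fun ε hε ↦ by
      obtain ⟨δ, hδ, hδε⟩ := ENNReal.lt_iff_exists_nnreal_btwn.1 hε
      obtain ⟨N, hN⟩ := exists_maximal_isSeparated (δ : ℝ≥0∞) μ.support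
      have cover : μ.support ⊆ ⋃ x ∈ N, closedEBall x δ :=
        isCover_iff_subset_iUnion_closedEBall.1 (.of_maximal_isSeparated hN)
      exact ⟨N, countable_of_isSeparated_of_subset_support hδ.ne' hN.1.2 hN.1.1,
        cover.trans <| iUnion₂_mono fun _ _ ↦ closedEBall_subset_closedEBall hδε.le⟩
  exact ⟨t, ht, hμt⟩

end Support

theorem stmt16_general {X : Type*} [TopologicalSpace X] [IsCompletelyPseudoMetrizableSpace X]
    [MeasurableSpace X] [BorelSpace X] (μ : Measure X) [SFinite μ] :
    (∀ E : Set X, MeasurableSet E →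
        μ E = ⨆ (K : Set X) (_ : K ⊆ E) (_ : IsCompact K), μ K) ↔
      ∃ S : Set X, IsClosed S ∧ IsSeparable S ∧ μ Sᶜ = 0 := by
  rw [← innerRegular_iff_measure_eq_iSup_isCompact]
  constructor
  · intro _
    exact ⟨μ.support, Measure.isClosed_support, isSeparable_support μ,
      Measure.measure_compl_support_of_innerRegular⟩
  · rintro ⟨S, hS, hS_sep, hμS⟩
    exact innerRegular_of_isSeparable_of_measure_compl_eq_zero hS hS_sep hμS

theorem stmt16 {M : Type*} [MetricSpace M] [CompleteSpace M]
    [MeasurableSpace M] [BorelSpace M]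
    (μ : Measure M) (hμ : IsFiniteMeasure μ) :
    (∀ E : Set M, MeasurableSet E →
        μ E = ⨆ (K : Set M) (_ : K ⊆ E) (_ : IsCompact K), μ K) ↔
      ∃ S : Set M, IsClosed S ∧ TopologicalSpace.IsSeparable S ∧ μ Sᶜ = 0 :=
  stmt16_general μ
end
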